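/- Let P be the R-measure. Then lim_{n→∞} (2·log n)/(−log V_n(P)) = 1; that is, the quantization dimension of P exists and equals one. -/

import Mathlib

open MeasureTheory ENNReal

noncomputable section

abbrev E2 : Type := EuclideanSpace ℝ (Fin 2)

/-- The point (a, b) of the Euclidean plane. -/
def pt (a b : ℝ) : E2 := (WithLp.equiv 2 (Fin 2 → ℝ)).symm ![a, b]

/-- S₁(x) = x/3. -/
def S1 : E2 → E2 := fun x => (3 : ℝ)⁻¹ • x

/-- S₂(x) = x/3 + (2/3, 0). -/
def S2 : E2 → E2 := fun x => (3 : ℝ)⁻¹ • x + pt (2/3) 0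

/-- S₃(x) = x/3 + (1/3, √3/3). -/
def S3 : E2 → E2 := fun x => (3 : ℝ)⁻¹ • x + pt (1/3) (Real.sqrt 3 / 3)

def Smap : Fin 3 → E2 → E2 := ![S1, S2, S3]

/-- For a word ω = ω₁⋯ω_k ∈ {1,2,3}^k, the composition S_ω = S_{ω₁} ∘ ⋯ ∘ S_{ω_k}. -/
def Sword {k : ℕ} (ω : Fin k → Fin 3) : E2 → E2 :=
  fun x => (List.ofFn fun i => Smap (ω i)).foldr (fun g y => g y) x

/-- The closed triangle with vertices (0,0), (1,0), (1/2, √3/2). -/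
def Tri : Set E2 := convexHull ℝ {pt 0 0, pt 1 0, pt (1/2) (Real.sqrt 3 / 2)}

/-- The distortion error ∫ min_{a ∈ α} ‖x − a‖² dμ of a set α of points. -/
def err (μ : Measure E2) (α : Set E2) : ℝ≥0∞ :=
  ∫⁻ x, ⨅ a ∈ α, ENNReal.ofReal (‖x - a‖ ^ 2) ∂μ

/-- The n-th quantization error V_n(μ). -/
def quantErr (μ : Measure E2) (n : ℕ) : ℝ≥0∞ :=
  ⨅ (α : Set E2) (_ : α.Finite ∧ α.ncard ≤ n), err μ α

/-- α is an optimal set of n-means for μ. -/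
def IsOptimal (μ : Measure E2) (n : ℕ) (α : Set E2) : Prop :=
  α.Finite ∧ α.ncard ≤ n ∧ err μ α = quantErr μ n

/-! ### Auxiliary material -/

/-- Translation vectors of the three similarities. -/
def tv : Fin 3 → E2 := ![0, pt (2/3) 0, pt (1/3) (Real.sqrt 3 / 3)]

/-- The three similarities in uniform notation. -/
def TS (i : Fin 3) : E2 → E2 := fun x => (3 : ℝ)⁻¹ • x + tv i

/-- The centroid of the triangle. -/
def cen : E2 := pt (1/2) (Real.sqrt 3 / 6)

lemma TS_zero : TS 0 = S1 := by
  funext x; simp [TS, S1, tv]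

lemma TS_one : TS 1 = S2 := by
  funext x; simp [TS, S2, tv]

lemma TS_two : TS 2 = S3 := by
  funext x; simp [TS, S3, tv]

lemma TS_meas (i : Fin 3) : Measurable (TS i) := by
  have : Continuous (TS i) := by unfold TS; fun_prop
  exact this.measurable

lemma norm_sq_E2 (x : E2) : ‖x‖ ^ 2 = x 0 ^ 2 + x 1 ^ 2 := by
  rw [EuclideanSpace.norm_sq_eq]; simp [Fin.sum_univ_two]

lemma pt_zero (a b : ℝ) : pt a b 0 = a := rfl
lemma pt_one (a b : ℝ) : pt a b 1 = b := rfl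

lemma tv_sep (i j : Fin 3) (hij : i ≠ j) : 2 / 3 ≤ ‖tv i - tv j‖ := by
  have h3 : Real.sqrt 3 ^ 2 = 3 := Real.sq_sqrt (by norm_num)
  refine (sq_le_sq₀ (by norm_num) (norm_nonneg _)).1 ?_
  rw [norm_sq_E2]
  fin_cases i <;> fin_cases j <;> first | exact absurd rfl hij | skip
  all_goals simp [tv, pt_zero, pt_one]
  all_goals nlinarith

lemma cen_close (i : Fin 3) : ‖TS i cen - cen‖ ≤ 2 / 5 := by
  have h3 : Real.sqrt 3 ^ 2 = 3 := Real.sq_sqrt (by norm_num)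
  refine (sq_le_sq₀ (norm_nonneg _) (by norm_num)).1 ?_
  rw [norm_sq_E2]
  fin_cases i
  all_goals simp [TS, tv, cen, pt_zero, pt_one]
  all_goals nlinarith

lemma TS_sub (i : Fin 3) (x y : E2) : TS i x - TS i y = (3 : ℝ)⁻¹ • (x - y) := by
  simp only [TS, smul_sub]; abel

lemma TS_norm_sub (i : Fin 3) (x y : E2) : ‖TS i x - TS i y‖ = ‖x - y‖ / 3 := by
  rw [TS_sub, norm_smul]; norm_num; ring

lemma inv_lint (P : Measure E2)
    (hP : P = (3 : ℝ≥0∞)⁻¹ • (P.map S1 + P.map S2 + P.map S3))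
    (f : E2 → ℝ≥0∞) (hf : Measurable f) :
    ∫⁻ x, f x ∂P = 3⁻¹ * ∑ i, ∫⁻ x, f (TS i x) ∂P := by
  conv_lhs => rw [hP]
  rw [lintegral_smul_measure, lintegral_add_measure, lintegral_add_measure,
    ← TS_zero, ← TS_one, ← TS_two, lintegral_map hf (TS_meas _), lintegral_map hf (TS_meas _),
    lintegral_map hf (TS_meas _), Fin.sum_univ_three]
  rfl

lemma inv_set (P : Measure E2)
    (hP : P = (3 : ℝ≥0∞)⁻¹ • (P.map S1 + P.map S2 + P.map S3))
    (s : Set E2) (hs : MeasurableSet s) :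
    P s = 3⁻¹ * ∑ i, P (TS i ⁻¹' s) := by
  conv_lhs => rw [hP]
  rw [Measure.smul_apply, Measure.add_apply, Measure.add_apply,
    ← TS_zero, ← TS_one, ← TS_two, Measure.map_apply (TS_meas _) hs,
    Measure.map_apply (TS_meas _) hs, Measure.map_apply (TS_meas _) hs, Fin.sum_univ_three]
  rfl

/-- The complement of a closed ball about the centroid. -/
def far (u : ℝ) : Set E2 := {x | 3 / 5 + u < ‖x - cen‖}

lemma far_meas (u : ℝ) : MeasurableSet (far u) :=
  (isOpen_lt continuous_const (by fun_prop)).measurableSet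

lemma third_sum (M : ℝ≥0∞) : (3 : ℝ≥0∞)⁻¹ * ∑ _i : Fin 3, M = M := by
  simp [← mul_assoc, ENNReal.inv_mul_cancel]

lemma far_step (P : Measure E2)
    (hP : P = (3 : ℝ≥0∞)⁻¹ • (P.map S1 + P.map S2 + P.map S3)) (u : ℝ) :
    P (far u) ≤ P (far (3 * u)) := by
  rw [inv_set P hP _ (far_meas u)]
  refine le_trans ?_ (third_sum (P (far (3 * u)))).le
  gcongr with i
  intro y hy
  simp only [far, Set.mem_preimage, Set.mem_ofPred_eq] at hy ⊢
  have h1 : ‖TS i y - cen‖ ≤ ‖TS i y - TS i cen‖ + ‖TS i cen - cen‖ := by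
    have := norm_add_le (TS i y - TS i cen) (TS i cen - cen)
    simpa using this
  rw [TS_norm_sub] at h1
  have := cen_close i
  linarith

lemma far_zero (P : Measure E2) [IsProbabilityMeasure P]
    (hP : P = (3 : ℝ≥0∞)⁻¹ • (P.map S1 + P.map S2 + P.map S3)) (u : ℝ) (hu : 0 < u) :
    P (far u) = 0 := by
  have h1 : ∀ k : ℕ, P (far u) ≤ P (far (3 ^ k * u)) := by
    intro k
    induction k with
    | zero => simp
    | succ k ih =>
      refine ih.trans ((far_step P hP _).trans (le_of_eq ?_))
      congr 2; ring
  have hanti : Antitone (fun k : ℕ => far (3 ^ k * u)) := by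
    intro a b hab x hx
    simp only [far, Set.mem_ofPred_eq] at hx ⊢
    have : (3 : ℝ) ^ a * u ≤ 3 ^ b * u := by gcongr; norm_num
    linarith
  have h2 := tendsto_measure_iInter_atTop (μ := P) (s := fun k : ℕ => far (3 ^ k * u))
    (fun k => (far_meas _).nullMeasurableSet) hanti ⟨0, measure_ne_top _ _⟩
  have h3 : (⋂ k : ℕ, far (3 ^ k * u)) = ∅ := by
    ext x
    simp only [Set.mem_iInter, Set.mem_empty_iff_false, iff_false, not_forall, far,
      Set.mem_ofPred_eq, not_lt]
    obtain ⟨k, hk⟩ := pow_unbounded_of_one_lt (‖x - cen‖ / u) (by norm_num : (1 : ℝ) < 3)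
    refine ⟨k, ?_⟩
    rw [div_lt_iff₀ hu] at hk
    linarith
  rw [h3, measure_empty] at h2
  exact le_antisymm (ge_of_tendsto' h2 h1) (zero_le)

lemma far_null (P : Measure E2) [IsProbabilityMeasure P]
    (hP : P = (3 : ℝ≥0∞)⁻¹ • (P.map S1 + P.map S2 + P.map S3)) :
    P (far 0) = 0 := by
  have : far 0 ⊆ ⋃ n : ℕ, far (1 / ((n : ℝ) + 1)) := by
    intro x hx
    simp only [far, Set.mem_ofPred_eq, Set.mem_iUnion] at hx ⊢
    obtain ⟨n, hn⟩ := exists_nat_one_div_lt (sub_pos.2 hx)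
    exact ⟨n, by linarith⟩
  refine measure_mono_null this (measure_iUnion_null fun n => far_zero P hP _ (by positivity))

lemma exists_near (P : Measure E2) [IsProbabilityMeasure P]
    (hP : P = (3 : ℝ≥0∞)⁻¹ • (P.map S1 + P.map S2 + P.map S3)) (s : Set E2) (hs : P s ≠ 0) :
    ∃ y ∈ s, ‖y - cen‖ ≤ 3 / 5 := by
  by_contra! h
  refine hs (measure_mono_null (fun y hy => ?_) (far_null P hP))
  simpa [far] using h y hy

lemma ball_step (P : Measure E2) [IsProbabilityMeasure P]
    (hP : P = (3 : ℝ≥0∞)⁻¹ • (P.map S1 + P.map S2 + P.map S3)) (r : ℝ) (hr : r ≤ 1 / 9)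
    (M : ℝ≥0∞) (hM : ∀ a, P (Metric.closedBall a (3 * r)) ≤ M) (a : E2) :
    P (Metric.closedBall a r) ≤ 3⁻¹ * M := by
  rw [inv_set P hP _ Metric.isClosed_closedBall.measurableSet]
  gcongr
  have hle : ∀ i, P (TS i ⁻¹' Metric.closedBall a r) ≤ M := by
    intro i
    refine (measure_mono ?_).trans (hM ((3 : ℝ) • (a - tv i)))
    intro y hy
    simp only [Set.mem_preimage, Metric.mem_closedBall, dist_eq_norm] at hy ⊢
    have : TS i y - a = (3 : ℝ)⁻¹ • (y - (3 : ℝ) • (a - tv i)) := by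
      simp only [TS, smul_sub, smul_smul]; norm_num; abel
    rw [this, norm_smul] at hy
    norm_num at hy
    linarith
  by_cases h : ∃ i, P (TS i ⁻¹' Metric.closedBall a r) ≠ 0
  · obtain ⟨i, hi⟩ := h
    rw [Finset.sum_eq_single i]
    · exact hle i
    · intro j _ hji
      by_contra hj
      obtain ⟨y, hy, hy'⟩ := exists_near P hP _ hi
      obtain ⟨z, hz, hz'⟩ := exists_near P hP _ hj
      simp only [Set.mem_preimage, Metric.mem_closedBall, dist_eq_norm] at hy hz
      have hs := tv_sep j i hji
      have e : tv j - tv i = (TS j z - a) - (TS i y - a) + (3 : ℝ)⁻¹ • ((y - cen) - (z - cen)) := by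
        simp only [TS, smul_sub]; abel
      have h1 := norm_add_le ((TS j z - a) - (TS i y - a)) ((3 : ℝ)⁻¹ • ((y - cen) - (z - cen)))
      have h2 := norm_sub_le (TS j z - a) (TS i y - a)
      have h3 := norm_sub_le (y - cen) (z - cen)
      rw [← e, norm_smul] at h1
      norm_num at h1 h2 h3
      linarith
    · simp
  · push Not at h
    simp [h]

lemma ball_bound (P : Measure E2) [IsProbabilityMeasure P]
    (hP : P = (3 : ℝ≥0∞)⁻¹ • (P.map S1 + P.map S2 + P.map S3)) (k : ℕ) :
    ∀ a, P (Metric.closedBall a ((3 : ℝ)⁻¹ ^ (k + 1))) ≤ 3⁻¹ ^ k := by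
  induction k with
  | zero => intro a; simpa using prob_le_one
  | succ k ih =>
    intro a
    rw [pow_succ' (3⁻¹ : ℝ≥0∞)]
    refine ball_step P hP _ ?_ _ ?_ a
    · calc (3 : ℝ)⁻¹ ^ (k + 1 + 1) = (3 : ℝ)⁻¹ ^ k * (1 / 9) := by ring
        _ ≤ 1 * (1 / 9) := by
          gcongr
          exact pow_le_one₀ (by norm_num) (by norm_num)
        _ = 1 / 9 := by ring
    · intro b
      have : (3 : ℝ) * (3 : ℝ)⁻¹ ^ (k + 1 + 1) = (3 : ℝ)⁻¹ ^ (k + 1) := by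
        rw [pow_succ' _ (k + 1)]; ring
      rw [this]; exact ih b

lemma err_lower (P : Measure E2) [IsProbabilityMeasure P]
    (hP : P = (3 : ℝ≥0∞)⁻¹ • (P.map S1 + P.map S2 + P.map S3)) (k n : ℕ)
    (hn : n ≤ 3 ^ (k + 1)) : ENNReal.ofReal (9⁻¹ ^ (k + 4)) ≤ quantErr P n := by
  refine le_iInf₂ fun α hα => ?_
  obtain ⟨hfin, hcard⟩ := hα
  set r : ℝ := (3 : ℝ)⁻¹ ^ (k + 2 + 1) with hr
  set U : Set E2 := ⋃ a ∈ hfin.toFinset, Metric.closedBall a r with hU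
  have hUm : MeasurableSet U :=
    Finset.measurableSet_biUnion _ fun a _ => Metric.isClosed_closedBall.measurableSet
  have hPU : P U ≤ 3⁻¹ := by
    calc P U ≤ ∑ a ∈ hfin.toFinset, P (Metric.closedBall a r) := measure_biUnion_finset_le _ _
      _ ≤ ∑ a ∈ hfin.toFinset, 3⁻¹ ^ (k + 2) := Finset.sum_le_sum fun a _ => ball_bound P hP _ a
      _ = (α.ncard : ℝ≥0∞) * 3⁻¹ ^ (k + 2) := by
        rw [Finset.sum_const, nsmul_eq_mul, Set.ncard_eq_toFinset_card _ hfin]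
      _ ≤ ((3 ^ (k + 1) : ℕ) : ℝ≥0∞) * 3⁻¹ ^ (k + 2) := by
        gcongr; exact hcard.trans hn
      _ = 3⁻¹ := by
        push_cast
        rw [pow_succ _ (k + 1), ← mul_assoc, ← mul_pow, ENNReal.mul_inv_cancel (by norm_num)
          (by norm_num), one_pow, one_mul]
  have hPUc : (9 : ℝ≥0∞)⁻¹ ≤ P Uᶜ := by
    have h1 : P U + P Uᶜ = 1 := prob_add_prob_compl hUm
    have h2 : P Uᶜ = 1 - P U := prob_compl_eq_one_sub hUm
    rw [h2]
    refine le_trans ?_ (tsub_le_tsub_left hPU 1)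
    refine ENNReal.le_sub_of_add_le_left (by norm_num) ?_
    rw [← ENNReal.toReal_le_toReal (by finiteness) (by finiteness),
      ENNReal.toReal_add (by finiteness) (by finiteness)]
    norm_num
  unfold err
  calc ENNReal.ofReal (9⁻¹ ^ (k + 4)) = ENNReal.ofReal (r ^ 2) * 9⁻¹ := by
        rw [show (9 : ℝ≥0∞)⁻¹ = ENNReal.ofReal 9⁻¹ by
          rw [ENNReal.ofReal_inv_of_pos (by norm_num)]; norm_num,
          ← ENNReal.ofReal_mul (by positivity)]
        congr 1
        rw [hr, ← pow_mul, mul_comm _ 2, pow_mul, pow_succ _ (k + 3)]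
        norm_num
    _ ≤ ENNReal.ofReal (r ^ 2) * P Uᶜ := by gcongr
    _ = ∫⁻ x in Uᶜ, ENNReal.ofReal (r ^ 2) ∂P := by simp
    _ ≤ ∫⁻ x in Uᶜ, ⨅ a ∈ α, ENNReal.ofReal (‖x - a‖ ^ 2) ∂P := by
        refine setLIntegral_mono' hUm.compl fun x hx => le_iInf₂ fun a ha => ?_
        have : r < ‖x - a‖ := by
          by_contra! h
          apply hx
          simp only [hU, Set.mem_iUnion]
          exact ⟨a, by simpa using ha, by simpa [dist_eq_norm] using h⟩
        have hr0 : 0 ≤ r := by positivity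
        gcongr
    _ ≤ _ := setLIntegral_le_lintegral _ _

lemma err_upper_step (P : Measure E2)
    (hP : P = (3 : ℝ≥0∞)⁻¹ • (P.map S1 + P.map S2 + P.map S3)) (n : ℕ) :
    quantErr P (3 * n) ≤ ENNReal.ofReal 9⁻¹ * quantErr P n := by
  unfold quantErr
  simp only [ENNReal.mul_iInf_of_ne (a := ENNReal.ofReal 9⁻¹) (by norm_num) (by finiteness)]
  refine le_iInf₂ fun α hα => ?_
  obtain ⟨hfin, hcard⟩ := hα
  let β : Set E2 := ((TS 0 '' α) ∪ (TS 1 '' α)) ∪ (TS 2 '' α)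
  have hβf : β.Finite := ((hfin.image _).union (hfin.image _)).union (hfin.image _)
  have hβc : β.ncard ≤ 3 * n := by
    have h0 := Set.ncard_union_le (TS 0 '' α ∪ TS 1 '' α) (TS 2 '' α)
    have h1 := Set.ncard_union_le (TS 0 '' α) (TS 1 '' α)
    have a0 := Set.ncard_image_le (f := TS 0) hfin
    have a1 := Set.ncard_image_le (f := TS 1) hfin
    have a2 := Set.ncard_image_le (f := TS 2) hfin
    change (TS 0 '' α ∪ TS 1 '' α ∪ TS 2 '' α).ncard ≤ _
    omega
  have hmem : ∀ i, ∀ a ∈ α, TS i a ∈ β := by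
    intro i a ha
    fin_cases i
    · exact Or.inl (Or.inl ⟨a, ha, rfl⟩)
    · exact Or.inl (Or.inr ⟨a, ha, rfl⟩)
    · exact Or.inr ⟨a, ha, rfl⟩
  refine (iInf₂_le β ⟨hβf, hβc⟩).trans ?_
  unfold err
  have hmeas : ∀ s : Set E2, s.Finite →
      Measurable fun x : E2 => ⨅ a ∈ s, ENNReal.ofReal (‖x - a‖ ^ 2) := by
    intro s hs
    exact Measurable.biInf s hs.countable fun a _ => by fun_prop
  rw [inv_lint P hP _ (hmeas β hβf)]
  refine le_trans ?_ (third_sum _).le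
  gcongr with i
  rw [← lintegral_const_mul _ (hmeas α hfin)]
  refine lintegral_mono fun x => ?_
  simp only [ENNReal.mul_iInf_of_ne (a := ENNReal.ofReal 9⁻¹) (by norm_num) (by finiteness)]
  refine le_iInf₂ fun a ha => (iInf₂_le _ (hmem i a ha)).trans (le_of_eq ?_)
  rw [TS_norm_sub, ← ENNReal.ofReal_mul (by norm_num)]
  congr 1; ring

lemma quantErr_anti (P : Measure E2) {m n : ℕ} (h : m ≤ n) : quantErr P n ≤ quantErr P m :=
  le_iInf₂ fun α hα => iInf₂_le α ⟨hα.1, hα.2.trans h⟩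

lemma err_one (P : Measure E2) [IsProbabilityMeasure P]
    (hP : P = (3 : ℝ≥0∞)⁻¹ • (P.map S1 + P.map S2 + P.map S3)) : quantErr P 1 ≤ 1 := by
  refine (iInf₂_le {cen} ⟨Set.finite_singleton _, by simp⟩).trans ?_
  unfold err
  simp only [Set.mem_singleton_iff, iInf_iInf_eq_left]
  have h : ∀ᵐ x ∂P, ENNReal.ofReal (‖x - cen‖ ^ 2) ≤ 1 := by
    rw [ae_iff]
    refine measure_mono_null (fun x hx => ?_) (far_null P hP)
    by_contra h
    simp only [far, Set.mem_ofPred_eq, not_lt] at h hx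
    apply hx
    rw [ENNReal.ofReal_le_one]
    nlinarith [norm_nonneg (x - cen)]
  calc _ ≤ ∫⁻ _, 1 ∂P := lintegral_mono_ae h
    _ = 1 := by simp

lemma err_upper (P : Measure E2) [IsProbabilityMeasure P]
    (hP : P = (3 : ℝ≥0∞)⁻¹ • (P.map S1 + P.map S2 + P.map S3)) (k : ℕ) :
    quantErr P (3 ^ k) ≤ ENNReal.ofReal (9⁻¹ ^ k) := by
  induction k with
  | zero => simpa using err_one P hP
  | succ k ih =>
    rw [pow_succ', pow_succ', ENNReal.ofReal_mul (by norm_num)]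
    exact (err_upper_step P hP _).trans (by gcongr)

lemma ratio_bounds (P : Measure E2) [IsProbabilityMeasure P]
    (hP : P = (3 : ℝ≥0∞)⁻¹ • (P.map S1 + P.map S2 + P.map S3)) (n : ℕ) (hn : 3 ≤ n) :
    ((Nat.log 3 n : ℕ) : ℝ) / ((Nat.log 3 n : ℕ) + 4) ≤
        (2 * Real.log n) / (- Real.log (quantErr P n).toReal) ∧
      (2 * Real.log n) / (- Real.log (quantErr P n).toReal) ≤
        (((Nat.log 3 n : ℕ) : ℝ) + 1) / (Nat.log 3 n : ℕ) := by
  set k := Nat.log 3 n with hk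
  have hk1 : 1 ≤ k := Nat.log_pos (by norm_num) hn
  have hlo : 3 ^ k ≤ n := Nat.pow_log_le_self 3 (by omega)
  have hhi : n ≤ 3 ^ (k + 1) := (Nat.lt_pow_succ_log_self (by norm_num) n).le
  have hU : quantErr P n ≤ ENNReal.ofReal (9⁻¹ ^ k) :=
    (quantErr_anti P hlo).trans (err_upper P hP k)
  have hL := err_lower P hP k n hhi
  have hU' : (quantErr P n).toReal ≤ 9⁻¹ ^ k := ENNReal.toReal_le_of_le_ofReal (by positivity) hU
  have hL' : 9⁻¹ ^ (k + 4) ≤ (quantErr P n).toReal :=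
    (ENNReal.ofReal_le_iff_le_toReal (ne_top_of_le_ne_top ENNReal.ofReal_ne_top hU)).1 hL
  have h9 : Real.log 9⁻¹ = - (2 * Real.log 3) := by
    rw [Real.log_inv, show (9 : ℝ) = 3 ^ 2 by norm_num, Real.log_pow]; norm_num
  have hV0 : 0 < (quantErr P n).toReal := lt_of_lt_of_le (by positivity) hL'
  have l1 := Real.log_le_log hV0 hU'
  have l2 := Real.log_le_log (by positivity) hL'
  rw [Real.log_pow, h9] at l1 l2
  have hn0 : (0 : ℝ) < n := by exact_mod_cast (by omega : 0 < n)
  have l3 : Real.log ((3 : ℝ) ^ k) ≤ Real.log n :=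
    Real.log_le_log (by positivity) (by exact_mod_cast hlo)
  have l4 : Real.log n ≤ Real.log ((3 : ℝ) ^ (k + 1)) :=
    Real.log_le_log hn0 (by exact_mod_cast hhi)
  rw [Real.log_pow] at l3 l4
  push_cast at l2 l4
  have hlog : 0 < Real.log 3 := Real.log_pos (by norm_num)
  have hk0 : (0 : ℝ) < k := by exact_mod_cast hk1
  have hkl := mul_pos hk0 hlog
  constructor
  · have : (k : ℝ) / (k + 4) = (2 * (k * Real.log 3)) / (2 * ((k + 4) * Real.log 3)) := by
      field_simp
    rw [this]
    apply div_le_div₀ <;> nlinarith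
  · have : ((k : ℝ) + 1) / k = (2 * ((k + 1) * Real.log 3)) / (2 * (k * Real.log 3)) := by
      field_simp
    rw [this]
    apply div_le_div₀ <;> nlinarith

/-- The quantization dimension of the R-measure P exists and equals one:
lim_{n→∞} (2 log n)/(− log V_n(P)) = 1. -/
theorem stmt_18 (P : Measure E2) [IsProbabilityMeasure P]
    (hP : P = (3 : ℝ≥0∞)⁻¹ • (P.map S1 + P.map S2 + P.map S3)) :
    Filter.Tendsto
      (fun n : ℕ => (2 * Real.log n) / (- Real.log (quantErr P n).toReal))
      Filter.atTop (nhds 1) := by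
  have hlog : Filter.Tendsto (fun n : ℕ => ((Nat.log 3 n : ℕ) : ℝ)) Filter.atTop Filter.atTop := by
    refine tendsto_natCast_atTop_atTop.comp ?_
    refine Filter.tendsto_atTop.2 fun b => ?_
    filter_upwards [Filter.eventually_ge_atTop (3 ^ b)] with n hn
    exact Nat.le_log_of_pow_le (by norm_num) hn
  have f1 : Filter.Tendsto (fun x : ℝ => x / (x + 4)) Filter.atTop (nhds 1) := by
    have h : Filter.Tendsto (fun x : ℝ => 1 - 4 / (x + 4)) Filter.atTop (nhds (1 - 0)) :=
      tendsto_const_nhds.sub (tendsto_const_nhds.div_atTop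
        (Filter.tendsto_atTop_add_const_right _ _ Filter.tendsto_id))
    rw [sub_zero] at h
    refine h.congr' ?_
    filter_upwards [Filter.eventually_gt_atTop 0] with x hx
    field_simp; ring
  have f2 : Filter.Tendsto (fun x : ℝ => (x + 1) / x) Filter.atTop (nhds 1) := by
    have h : Filter.Tendsto (fun x : ℝ => 1 + 1 / x) Filter.atTop (nhds (1 + 0)) :=
      tendsto_const_nhds.add (tendsto_const_nhds.div_atTop Filter.tendsto_id)
    rw [add_zero] at h
    refine h.congr' ?_
    filter_upwards [Filter.eventually_gt_atTop 0] with x hx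
    field_simp
  refine tendsto_of_tendsto_of_tendsto_of_le_of_le' (f1.comp hlog) (f2.comp hlog) ?_ ?_
  · filter_upwards [Filter.eventually_ge_atTop 3] with n hn
    exact (ratio_bounds P hP n hn).1
  · filter_upwards [Filter.eventually_ge_atTop 3] with n hn
    exact (ratio_bounds P hP n hn).2

end
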